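/- Let w be a non-increasing positive function on I=(0,a), 0<a≤∞, with W(t)=∫₀ᵗ w dm finite on I. For a measurable f on I define B(f) = inf{ ∫_I |u| dm + C : u measurable, C ≥ 0, f = u + v a.e. for some measurable v with v*(t) ≤ C·w(t) for all t∈I }. Then for every measurable f on I, inf{ B(g) : g measurable on I with f ≺ g } = inf{ ∫_I |u| dm + sup_{x∈I} (1/W(x))∫₀ˣ h* dm : u, h measurable, f = u + h a.e. }, the equality understood in [0,∞]; that is, the space Q_{L₁+L∞,w} coincides with L₁ + M_W with equality of norms. -/

import Mathlib

open MeasureTheory Set Filter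
open scoped ENNReal

/-- The interval `(0, a)` for `a : ℝ≥0∞` (equals `(0,∞)` when `a = ∞`). -/
def Iset (a : ℝ≥0∞) : Set ℝ := {x : ℝ | 0 < x ∧ ENNReal.ofReal x < a}

/-- Lebesgue measure restricted to the interval `(0,a)`. -/
noncomputable def volI (a : ℝ≥0∞) : Measure ℝ := volume.restrict (Iset a)

/-- Decreasing rearrangement of an `ℝ≥0∞`-valued function with respect to a measure `μ`:
`f^{*,μ}(t) = inf {s > 0 : μ({f > s}) ≤ t}`. -/
noncomputable def rearrE (μ : Measure ℝ) (f : ℝ → ℝ≥0∞) (t : ℝ) : ℝ≥0∞ :=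
  sInf {s : ℝ≥0∞ | 0 < s ∧ μ {x | s < f x} ≤ ENNReal.ofReal t}

/-- Decreasing rearrangement of a real function with respect to a measure `μ` on `ℝ`:
`f^{*,μ}(t) = inf {s > 0 : μ({|f| > s}) ≤ t}`. -/
noncomputable def rearr (μ : Measure ℝ) (f : ℝ → ℝ) (t : ℝ) : ℝ≥0∞ :=
  rearrE μ (fun x => ENNReal.ofReal |f x|) t

/-- The measure `w·dm` on the set `I`. -/
noncomputable def wMeas (I : Set ℝ) (w : ℝ → ℝ) : Measure ℝ :=
  (volume.restrict I).withDensity (fun t => ENNReal.ofReal (w t))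

/-- `W(t) = ∫₀ᵗ w dm`. -/
noncomputable def Wfun (w : ℝ → ℝ) (t : ℝ) : ℝ := ∫ s in Set.Ioo (0:ℝ) t, w s

/-- `b = ∫_I w dm` as an extended real number. -/
noncomputable def bval (a : ℝ≥0∞) (w : ℝ → ℝ) : ℝ≥0∞ := ∫⁻ x in Iset a, ENNReal.ofReal (w x)

/-- `B(f)`: the infimum of `∫_I |u| dm + C` over decompositions `f = u + v` a.e. with
`v*(t) ≤ C·w(t)` for all `t ∈ I` (the gauge of `M_{L₁+L∞,w} = L₁ + M_{L∞,w}`). -/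
noncomputable def Bnorm (a : ℝ≥0∞) (w f : ℝ → ℝ) : ℝ≥0∞ :=
  sInf {c : ℝ≥0∞ | ∃ u v : ℝ → ℝ, ∃ C : ℝ, Measurable u ∧ Measurable v ∧ 0 ≤ C ∧
    (∀ᵐ x ∂(volI a), f x = u x + v x) ∧
    (∀ t ∈ Iset a, rearr (volI a) v t ≤ ENNReal.ofReal (C * w t)) ∧
    c = (∫⁻ x in Iset a, ENNReal.ofReal |u x|) + ENNReal.ofReal C}

/-- The Marcinkiewicz norm `‖h‖_{M_W} = sup_{x∈I} (1/W(x)) ∫₀ˣ h* dm`. -/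
noncomputable def MWnorm (a : ℝ≥0∞) (w h : ℝ → ℝ) : ℝ≥0∞ :=
  ⨆ x ∈ Iset a,
    (∫⁻ t in Set.Ioo 0 x, rearr (volI a) h t) / (∫⁻ t in Set.Ioo 0 x, ENNReal.ofReal (w t))

lemma aux_vol (c : ℝ≥0∞) : volume ({s : ℝ | ENNReal.ofReal s < c} ∩ Ioi 0) = c := by
  rcases eq_or_ne c ∞ with rfl | hc
  · have : ({s : ℝ | ENNReal.ofReal s < ∞} ∩ Ioi 0) = Ioi 0 := by
      ext s; simp
    rw [this]; simp
  · have : ({s : ℝ | ENNReal.ofReal s < c} ∩ Ioi 0) = Ioo 0 c.toReal := by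
      ext s
      simp only [mem_inter_iff, mem_ofPred_eq, mem_Ioi, mem_Ioo]
      constructor
      · rintro ⟨h1, h2⟩
        exact ⟨h2, (ENNReal.ofReal_lt_iff_lt_toReal h2.le hc).1 h1⟩
      · rintro ⟨h1, h2⟩
        exact ⟨(ENNReal.ofReal_lt_iff_lt_toReal h1.le hc).2 h2, h1⟩
    rw [this]; simp [ENNReal.ofReal_toReal hc]

lemma aux_layer (μ : Measure ℝ) [SFinite μ] (F : ℝ → ℝ≥0∞) (hF : Measurable F) :
    ∫⁻ x, F x ∂μ = ∫⁻ s in Ioi (0:ℝ), μ {x | ENNReal.ofReal s < F x} := by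
  have hm : MeasurableSet {p : ℝ × ℝ | ENNReal.ofReal p.2 < F p.1} :=
    measurableSet_lt (by fun_prop) (by fun_prop)
  have h1 : ∀ x, F x = ∫⁻ s in Ioi (0:ℝ),
      ({p : ℝ × ℝ | ENNReal.ofReal p.2 < F p.1}.indicator 1 (x, s) : ℝ≥0∞) := by
    intro x
    have hms : MeasurableSet {s : ℝ | ENNReal.ofReal s < F x} :=
      measurableSet_lt (by fun_prop) (by fun_prop)
    have : (fun s => ({p : ℝ × ℝ | ENNReal.ofReal p.2 < F p.1}.indicator 1 (x, s) : ℝ≥0∞))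
        = {s : ℝ | ENNReal.ofReal s < F x}.indicator 1 := by
      ext s; simp [indicator]
    rw [this, lintegral_indicator_one hms, Measure.restrict_apply hms, aux_vol]
  have h2 : ∀ s, μ {x | ENNReal.ofReal s < F x} = ∫⁻ x,
      ({p : ℝ × ℝ | ENNReal.ofReal p.2 < F p.1}.indicator 1 (x, s) : ℝ≥0∞) ∂μ := by
    intro s
    have hms : MeasurableSet {x : ℝ | ENNReal.ofReal s < F x} :=
      measurableSet_lt (by fun_prop) (by fun_prop)
    have : (fun x => ({p : ℝ × ℝ | ENNReal.ofReal p.2 < F p.1}.indicator 1 (x, s) : ℝ≥0∞))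
        = {x : ℝ | ENNReal.ofReal s < F x}.indicator 1 := by
      ext x; simp [indicator]
    rw [this, lintegral_indicator_one hms]
  rw [lintegral_congr h1, lintegral_congr h2]
  apply lintegral_lintegral_swap
  exact (measurable_one.indicator hm).aemeasurable

lemma rearrE_le_iff (μ : Measure ℝ) (F : ℝ → ℝ≥0∞) (t : ℝ) (κ : ℝ≥0∞) :
    rearrE μ F t ≤ κ ↔ μ {x | κ < F x} ≤ ENNReal.ofReal t := by
  constructor
  · intro h
    rcases eq_or_ne κ ∞ with rfl | hκ
    · simp
    obtain ⟨s, hs, hs1, hs2⟩ := exists_seq_strictAnti_tendsto' (lt_top_iff_ne_top.2 hκ)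
    have hU : {x | κ < F x} = ⋃ n, {x | s n < F x} := by
      ext x
      simp only [mem_ofPred_eq, mem_iUnion]
      constructor
      · intro hx
        exact (hs2.eventually_lt_const hx).exists
      · rintro ⟨n, hn⟩
        exact (hs1 n).1.trans hn
    rw [hU, Monotone.measure_iUnion]
    · refine iSup_le fun n => ?_
      obtain ⟨s', ⟨_, h2⟩, h3⟩ := sInf_lt_iff.1 (lt_of_le_of_lt h (hs1 n).1)
      exact (measure_mono fun x (hx : s n < F x) => h3.trans hx).trans h2
    · intro i j hij x (hx : s i < F x)
      exact (hs.antitone hij).trans_lt hx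
  · intro h
    refine le_of_forall_gt_imp_ge_of_dense fun c hc => ?_
    refine sInf_le ⟨bot_le.trans_lt hc, (measure_mono ?_).trans h⟩
    intro x (hx : c < F x)
    exact hc.trans hx

lemma lt_rearrE_iff (μ : Measure ℝ) (F : ℝ → ℝ≥0∞) (t : ℝ) (κ : ℝ≥0∞) :
    κ < rearrE μ F t ↔ ENNReal.ofReal t < μ {x | κ < F x} := by
  rw [← not_le, rearrE_le_iff, not_le]

lemma rearrE_anti (μ : Measure ℝ) (F : ℝ → ℝ≥0∞) : Antitone (rearrE μ F) := by
  intro t t' h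
  rw [rearrE_le_iff]
  exact ((rearrE_le_iff μ F t _).1 le_rfl).trans (ENNReal.ofReal_le_ofReal h)

lemma rearrE_mono (μ : Measure ℝ) {F G : ℝ → ℝ≥0∞} (h : ∀ x, F x ≤ G x) (t : ℝ) :
    rearrE μ F t ≤ rearrE μ G t := by
  rw [rearrE_le_iff]
  refine (measure_mono ?_).trans ((rearrE_le_iff μ G t _).1 le_rfl)
  intro x hx
  exact lt_of_lt_of_le hx (h x)

lemma rearrE_meas (μ : Measure ℝ) (F : ℝ → ℝ≥0∞) : Measurable (rearrE μ F) :=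
  (rearrE_anti μ F).measurable

lemma equimeas (μ : Measure ℝ) [SFinite μ] (F : ℝ → ℝ≥0∞) (hF : Measurable F) (κ : ℝ≥0∞) :
    ∫⁻ t in Ioi (0:ℝ), (rearrE μ F t - κ) = ∫⁻ x, (F x - κ) ∂μ := by
  rw [aux_layer _ _ ((rearrE_meas μ F).sub_const κ), aux_layer _ _ (hF.sub_const κ)]
  refine lintegral_congr fun s => ?_
  have h1 : {x | ENNReal.ofReal s < F x - κ} = {x | κ + ENNReal.ofReal s < F x} := by
    ext x; simp [lt_tsub_iff_left]
  have h2 : {t | ENNReal.ofReal s < rearrE μ F t - κ}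
      = {t : ℝ | ENNReal.ofReal t < μ {x | κ + ENNReal.ofReal s < F x}} := by
    ext t; simp only [mem_ofPred_eq, lt_tsub_iff_left, lt_rearrE_iff]
  rw [h1, h2, Measure.restrict_apply, aux_vol]
  exact measurableSet_lt (by fun_prop) (by fun_prop)

lemma equimeas0 (μ : Measure ℝ) [SFinite μ] (F : ℝ → ℝ≥0∞) (hF : Measurable F) :
    ∫⁻ t in Ioi (0:ℝ), rearrE μ F t = ∫⁻ x, F x ∂μ := by
  simpa using equimeas μ F hF 0

lemma int_le (μ : Measure ℝ) [SFinite μ] (F : ℝ → ℝ≥0∞) (hF : Measurable F) (s : ℝ≥0∞) (x : ℝ) :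
    ∫⁻ t in Ioo 0 x, rearrE μ F t ≤ ENNReal.ofReal x * s + ∫⁻ y, (F y - s) ∂μ := by
  calc ∫⁻ t in Ioo 0 x, rearrE μ F t ≤ ∫⁻ t in Ioo 0 x, (s + (rearrE μ F t - s)) :=
        lintegral_mono fun t => le_add_tsub
    _ = ENNReal.ofReal x * s + ∫⁻ t in Ioo 0 x, (rearrE μ F t - s) := by
        rw [lintegral_add_left measurable_const]
        simp [mul_comm]
    _ ≤ _ := by
        rw [← equimeas μ F hF s]
        gcongr
        exact fun t ht => ht.1

lemma le_int (μ : Measure ℝ) [SFinite μ] (F : ℝ → ℝ≥0∞) (hF : Measurable F) (x : ℝ) :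
    ENNReal.ofReal x * rearrE μ F x + ∫⁻ y, (F y - rearrE μ F x) ∂μ
      ≤ ∫⁻ t in Ioo 0 x, rearrE μ F t := by
  set s := rearrE μ F x with hs
  have e1 : ∫⁻ t in Ioo 0 x, rearrE μ F t = ∫⁻ t in Ioo 0 x, (s + (rearrE μ F t - s)) := by
    refine setLIntegral_congr_fun measurableSet_Ioo fun t ht => ?_
    exact (add_tsub_cancel_of_le (rearrE_anti μ F ht.2.le)).symm
  have e2 : ∫⁻ t in Ioi (0:ℝ), (rearrE μ F t - s) = ∫⁻ t in Ioo 0 x, (rearrE μ F t - s) := by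
    rw [← lintegral_indicator measurableSet_Ioi, ← lintegral_indicator measurableSet_Ioo]
    refine lintegral_congr fun t => ?_
    by_cases h0 : 0 < t
    · by_cases hx : t < x
      · simp [indicator, h0, hx]
      · have h3 : rearrE μ F t - s = 0 := tsub_eq_zero_of_le (rearrE_anti μ F (not_lt.1 hx))
        simp [indicator, h0, hx, h3]
    · simp [indicator, h0]
  rw [e1, lintegral_add_left measurable_const, ← equimeas μ F hF s, e2]
  simp [mul_comm]

lemma subadd (μ : Measure ℝ) [SFinite μ] (F G H : ℝ → ℝ≥0∞) (hF : Measurable F)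
    (hG : Measurable G) (hH : Measurable H) (h : ∀ᵐ y ∂μ, F y ≤ G y + H y) (x : ℝ) :
    ∫⁻ t in Ioo 0 x, rearrE μ F t
      ≤ (∫⁻ t in Ioo 0 x, rearrE μ G t) + ∫⁻ t in Ioo 0 x, rearrE μ H t := by
  set r := rearrE μ G x
  set s := rearrE μ H x
  calc _ ≤ ENNReal.ofReal x * (r + s) + ∫⁻ y, (F y - (r + s)) ∂μ := int_le μ F hF _ x
    _ ≤ ENNReal.ofReal x * (r + s) + ∫⁻ y, ((G y - r) + (H y - s)) ∂μ := by
        gcongr 1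
        refine lintegral_mono_ae ?_
        filter_upwards [h] with y hy
        exact (tsub_le_tsub_right hy _).trans add_tsub_add_le_tsub_add_tsub
    _ = (ENNReal.ofReal x * r + ∫⁻ y, (G y - r) ∂μ)
        + (ENNReal.ofReal x * s + ∫⁻ y, (H y - s) ∂μ) := by
        rw [lintegral_add_left (hG.sub_const r)]; ring
    _ ≤ _ := add_le_add (le_int μ G hG x) (le_int μ H hH x)

lemma hardy (μ : Measure ℝ) [SFinite μ] (hμ : μ ≤ volume) (F : ℝ → ℝ≥0∞) (hF : Measurable F)
    (x : ℝ) :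
    ∫⁻ t in Ioo 0 x, F t ∂μ ≤ ∫⁻ t in Ioo 0 x, rearrE μ F t := by
  refine le_trans ?_ (le_int μ F hF x)
  set s := rearrE μ F x
  calc ∫⁻ t in Ioo 0 x, F t ∂μ ≤ ∫⁻ t in Ioo 0 x, (s + (F t - s)) ∂μ :=
        lintegral_mono fun t => le_add_tsub
    _ = s * μ (Ioo 0 x) + ∫⁻ t in Ioo 0 x, (F t - s) ∂μ := by
        rw [lintegral_add_left measurable_const]; simp
    _ ≤ _ := by
        rw [mul_comm]
        refine add_le_add (mul_le_mul_left ?_ _) (setLIntegral_le_lintegral _ _)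
        calc μ (Ioo 0 x) ≤ volume (Ioo 0 x) := hμ _
          _ = _ := by simp

lemma avg (w : ℝ → ℝ≥0∞) (hw : AntitoneOn w (Ioi 0)) (x y : ℝ)
    (hy : 0 < y) (hyx : y ≤ x) :
    ENNReal.ofReal y * ∫⁻ t in Ioo 0 x, w t ≤ ENNReal.ofReal x * ∫⁻ t in Ioo 0 y, w t := by
  have hsplit : ∫⁻ t in Ioo 0 x, w t ≤ (∫⁻ t in Ioo 0 y, w t) + ∫⁻ t in Ico y x, w t := by
    refine (lintegral_mono_set ?_).trans (lintegral_union_le _ _ _)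
    intro t ht
    rcases lt_or_ge t y with h | h
    · exact Or.inl ⟨ht.1, h⟩
    · exact Or.inr ⟨h, ht.2⟩
  have h1 : ∫⁻ t in Ico y x, w t ≤ ENNReal.ofReal (x - y) * w y := by
    calc _ ≤ ∫⁻ t in Ico y x, w y :=
          setLIntegral_mono measurable_const fun t ht => hw hy (hy.trans_le ht.1) ht.1
      _ = _ := by simp [mul_comm]
  have h2 : ENNReal.ofReal y * w y ≤ ∫⁻ t in Ioo 0 y, w t := by
    calc _ = ∫⁻ t in Ioo 0 y, w y := by simp [mul_comm]
      _ ≤ _ := setLIntegral_mono' measurableSet_Ioo fun t ht => hw ht.1 hy ht.2.le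
  calc _ ≤ ENNReal.ofReal y * ((∫⁻ t in Ioo 0 y, w t) + ENNReal.ofReal (x - y) * w y) := by
        gcongr; exact hsplit.trans (by gcongr)
    _ = ENNReal.ofReal y * (∫⁻ t in Ioo 0 y, w t)
        + ENNReal.ofReal (x - y) * (ENNReal.ofReal y * w y) := by ring
    _ ≤ ENNReal.ofReal y * (∫⁻ t in Ioo 0 y, w t)
        + ENNReal.ofReal (x - y) * (∫⁻ t in Ioo 0 y, w t) := by gcongr
    _ = _ := by
        rw [← add_mul, ← ENNReal.ofReal_add hy.le (by linarith)]; simp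

lemma Ioi_exists (φ : ℝ → ℝ≥0∞) (A : ℝ≥0∞) (h : A < ∫⁻ t in Ioi (0:ℝ), φ t) :
    ∃ x : ℝ, 0 < x ∧ A < ∫⁻ t in Ioo 0 x, φ t := by
  have hU : Ioi (0:ℝ) = ⋃ n : ℕ, Ioo (0:ℝ) (n + 1) := by
    ext t
    simp only [mem_Ioi, mem_iUnion, mem_Ioo]
    constructor
    · intro ht
      obtain ⟨n, hn⟩ := exists_nat_gt t
      exact ⟨n, ht, by linarith⟩
    · rintro ⟨n, h, _⟩; exact h
  have hd : Directed (· ⊆ ·) (fun n : ℕ => Ioo (0:ℝ) (n + 1)) := by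
    refine Monotone.directed_le (f := fun n : ℕ => Ioo (0:ℝ) (n + 1)) ?_
    intro i j hij
    refine Ioo_subset_Ioo_right ?_
    have : (i:ℝ) ≤ j := by exact_mod_cast hij
    linarith
  rw [hU, setLIntegral_iUnion_of_directed _ hd] at h
  obtain ⟨n, hn⟩ := lt_iSup_iff.1 h
  exact ⟨n + 1, by positivity, hn⟩

lemma Ioo_le (φ : ℝ → ℝ≥0∞) (c : ℝ≥0∞) (z : ℝ) (hz : 0 < z)
    (h : ∀ x, 0 < x → x < z → ∫⁻ t in Ioo 0 x, φ t ≤ c) : ∫⁻ t in Ioo 0 z, φ t ≤ c := by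
  obtain ⟨s, hs, hs1, hs2⟩ := exists_seq_strictMono_tendsto' hz
  have hU : Ioo (0:ℝ) z = ⋃ n : ℕ, Ioo (0:ℝ) (s n) := by
    ext t
    simp only [mem_iUnion, mem_Ioo]
    constructor
    · rintro ⟨h0, h1⟩
      obtain ⟨n, hn⟩ := (hs2.eventually_const_lt h1).exists
      exact ⟨n, h0, hn⟩
    · rintro ⟨n, h, h'⟩; exact ⟨h, h'.trans (hs1 n).2⟩
  have hd : Directed (· ⊆ ·) (fun n : ℕ => Ioo (0:ℝ) (s n)) := by
    refine Monotone.directed_le (f := fun n : ℕ => Ioo (0:ℝ) (s n)) ?_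
    intro i j hij
    exact Ioo_subset_Ioo_right (hs.monotone hij)
  rw [hU, setLIntegral_iUnion_of_directed _ hd]
  exact iSup_le fun n => h _ (hs1 n).1 (hs1 n).2

/-- Truncating at a level where the tail mass exceeds `A` leaves something submajorized by `w`. -/
lemma core1 (μ : Measure ℝ) [SFinite μ] (F w : ℝ → ℝ≥0∞) (hF : Measurable F)
    (hw : AntitoneOn w (Ioi 0)) (A : ℝ≥0∞) (hA : A ≠ ∞)
    (hmaj : ∀ x : ℝ, 0 < x → ∫⁻ t in Ioo 0 x, rearrE μ F t ≤ A + ∫⁻ t in Ioo 0 x, w t)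
    (κ : ℝ≥0∞) (hκ : A < ∫⁻ y, (F y - κ) ∂μ) (y : ℝ) (hy : 0 < y) :
    ∫⁻ t in Ioo 0 y, min (rearrE μ F t) κ ≤ ∫⁻ t in Ioo 0 y, w t := by
  have key : ∀ x : ℝ, 0 < x → A ≤ ∫⁻ t in Ioo 0 x, (rearrE μ F t - κ) →
      ∫⁻ t in Ioo 0 x, min (rearrE μ F t) κ ≤ ∫⁻ t in Ioo 0 x, w t := by
    intro x hx hAx
    have e : ∫⁻ t in Ioo 0 x, rearrE μ F t = (∫⁻ t in Ioo 0 x, (rearrE μ F t - κ))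
        + ∫⁻ t in Ioo 0 x, min (rearrE μ F t) κ := by
      rw [← lintegral_add_left ((rearrE_meas μ F).sub_const κ)]
      refine lintegral_congr fun t => ?_
      exact (tsub_add_min).symm
    have := (add_le_add_left hAx _).trans (e.symm.le.trans (hmaj x hx))
    exact (ENNReal.add_le_add_iff_left hA).1 this
  by_cases hAy : A ≤ ∫⁻ t in Ioo 0 y, (rearrE μ F t - κ)
  · exact key y hy hAy
  rw [not_le] at hAy
  rw [← equimeas μ F hF κ] at hκ
  obtain ⟨x, hx, hAx⟩ := Ioi_exists _ _ hκ
  set m := μ {z | κ < F z} with hm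
  -- y < m
  have hym : ENNReal.ofReal y < m := by
    by_contra hcon
    have hle : rearrE μ F y ≤ κ := by
      rw [rearrE_le_iff]; exact not_lt.1 hcon
    have : ∫⁻ t in Ioi (0:ℝ), (rearrE μ F t - κ) ≤ ∫⁻ t in Ioo 0 y, (rearrE μ F t - κ) := by
      rw [← lintegral_indicator measurableSet_Ioi, ← lintegral_indicator measurableSet_Ioo]
      refine lintegral_mono fun t => ?_
      by_cases h0 : 0 < t
      · by_cases hx : t < y
        · simp [indicator, h0, hx]
        · simp [indicator, h0, hx, tsub_eq_zero_of_le ((rearrE_anti μ F (not_lt.1 hx)).trans hle)]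
      · simp [indicator, h0]
    exact absurd (hκ.trans_le this) (not_lt.2 hAy.le)
  set x1 := (min (ENNReal.ofReal x) m).toReal with hx1
  have hne : min (ENNReal.ofReal x) m ≠ ∞ := (min_le_left _ _).trans_lt ENNReal.ofReal_lt_top |>.ne
  have hyx : y ≤ x := by
    by_contra hcon
    refine absurd (hAx.trans_le (lintegral_mono_set (Ioo_subset_Ioo_right (not_le.1 hcon).le))) ?_
    exact not_lt.2 hAy.le
  have hyx1 : y ≤ x1 := by
    rw [hx1, ← ENNReal.ofReal_le_iff_le_toReal hne]
    exact le_min (ENNReal.ofReal_le_ofReal hyx) hym.le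
  have hx1x : x1 ≤ x := ENNReal.toReal_le_of_le_ofReal hx.le (min_le_left _ _)
  have hlt : ∀ t ∈ Ioo 0 x1, κ < rearrE μ F t := by
    intro t ht
    rw [lt_rearrE_iff]
    exact ((ENNReal.ofReal_lt_iff_lt_toReal ht.1.le hne).2 ht.2).trans_le (min_le_right _ _)
  have hge : ∀ t, x1 ≤ t → t < x → rearrE μ F t ≤ κ := by
    intro t h1 h2
    rw [rearrE_le_iff]
    have h3 : min (ENNReal.ofReal x) m ≤ ENNReal.ofReal t := by
      rw [← ENNReal.ofReal_toReal hne]; exact ENNReal.ofReal_le_ofReal h1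
    rcases min_le_iff.1 h3 with h4 | h4
    · exact absurd ((ENNReal.ofReal_le_ofReal_iff ((hy.le.trans hyx1).trans h1)).1 h4) (not_le.2 h2)
    · exact h4
  have hAx1 : A ≤ ∫⁻ t in Ioo 0 x1, (rearrE μ F t - κ) := by
    refine hAx.le.trans ?_
    rw [← lintegral_indicator measurableSet_Ioo, ← lintegral_indicator measurableSet_Ioo]
    refine lintegral_mono fun t => ?_
    by_cases h0 : 0 < t ∧ t < x
    · by_cases hx : t < x1
      · simp [indicator, h0, hx]
      · simp [indicator, h0, hx, tsub_eq_zero_of_le (hge t (not_lt.1 hx) h0.2)]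
    · simp [indicator, h0]
  have hx10 : 0 < x1 := hy.trans_le hyx1
  have k1 := key x1 hx10 hAx1
  have e1 : ∀ z, z ≤ x1 → ∫⁻ t in Ioo 0 z, min (rearrE μ F t) κ = ENNReal.ofReal z * κ := by
    intro z hz
    calc _ = ∫⁻ t in Ioo 0 z, κ := setLIntegral_congr_fun measurableSet_Ioo
          fun t ht => min_eq_right (hlt t ⟨ht.1, ht.2.trans_le hz⟩).le
      _ = _ := by simp [mul_comm]
  rw [e1 x1 le_rfl] at k1
  rw [e1 y hyx1]
  have k2 := avg w hw x1 y hy hyx1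
  have k3 : ENNReal.ofReal x1 * (ENNReal.ofReal y * κ)
      ≤ ENNReal.ofReal x1 * ∫⁻ t in Ioo 0 y, w t := by
    refine le_trans ?_ k2
    rw [mul_left_comm]
    gcongr
  exact (ENNReal.mul_le_mul_iff_right (by simpa using hx10) ENNReal.ofReal_ne_top).1 k3

lemma core (μ : Measure ℝ) [SFinite μ] (F w : ℝ → ℝ≥0∞) (hF : Measurable F)
    (hFt : ∀ x, F x ≠ ∞)
    (hw : AntitoneOn w (Ioi 0)) (A : ℝ≥0∞) (hA : A ≠ ∞)
    (hmaj : ∀ x : ℝ, 0 < x → ∫⁻ t in Ioo 0 x, rearrE μ F t ≤ A + ∫⁻ t in Ioo 0 x, w t) :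
    ∃ κ : ℝ≥0∞, ∫⁻ y, (F y - κ) ∂μ ≤ A ∧ ∀ y : ℝ, 0 < y →
      ∫⁻ t in Ioo 0 y, min (rearrE μ F t) κ ≤ ∫⁻ t in Ioo 0 y, w t := by
  set S := {κ : ℝ≥0∞ | ∫⁻ y, (F y - κ) ∂μ ≤ A} with hS
  have hne : S.Nonempty := ⟨∞, by simp [hS]⟩
  refine ⟨sInf S, ?_, ?_⟩
  · obtain ⟨s, hs, hs1, hs2⟩ := exists_seq_tendsto_sInf hne (OrderBot.bddBelow S)
    have ht : Tendsto (fun n => ∫⁻ y, (F y - s n) ∂μ) atTop (nhds (∫⁻ y, (F y - sInf S) ∂μ)) := by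
      refine lintegral_tendsto_of_tendsto_of_monotone
        (fun n => (hF.sub_const _).aemeasurable) ?_ ?_
      · exact Eventually.of_forall fun x i j hij => tsub_le_tsub_left (hs hij) _
      · exact Eventually.of_forall fun x =>
          ENNReal.Tendsto.sub tendsto_const_nhds hs1 (Or.inl (hFt x))
    exact le_of_tendsto' ht hs2
  · intro y hy
    rcases eq_or_ne (sInf S) 0 with h0 | h0
    · simp [h0]
    obtain ⟨s, hs, hs1, hs2⟩ := exists_seq_strictMono_tendsto' (pos_iff_ne_zero.2 h0)
    have ht : Tendsto (fun n => ∫⁻ t in Ioo 0 y, min (rearrE μ F t) (s n)) atTop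
        (nhds (∫⁻ t in Ioo 0 y, min (rearrE μ F t) (sInf S))) := by
      refine lintegral_tendsto_of_tendsto_of_monotone
        (fun n => ((rearrE_meas μ F).min measurable_const).aemeasurable) ?_ ?_
      · exact Eventually.of_forall fun x i j hij => min_le_min_left _ (hs.monotone hij)
      · exact Eventually.of_forall fun x => tendsto_const_nhds.min hs2
    refine le_of_tendsto' ht fun n => ?_
    refine core1 μ F w hF hw A hA hmaj (s n) ?_ y hy
    by_contra hcon
    exact absurd (sInf_le (show s n ∈ S from not_lt.1 hcon)) (not_le.2 (hs1 n).2)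

lemma Iset_meas (a : ℝ≥0∞) : MeasurableSet (Iset a) :=
  (measurableSet_lt measurable_const measurable_id).inter
    (measurableSet_lt ENNReal.measurable_ofReal measurable_const)

instance volI_sfinite (a : ℝ≥0∞) : SFinite (volI a) := by unfold volI; infer_instance

lemma volI_univ (a : ℝ≥0∞) (s : Set ℝ) : volI a s ≤ a := by
  refine (measure_mono (subset_univ s)).trans ?_
  unfold volI
  rw [Measure.restrict_apply_univ]
  refine (measure_mono ?_).trans (aux_vol a).le
  intro x hx; exact ⟨hx.2, hx.1⟩

lemma rearrE_off (a : ℝ≥0∞) (F : ℝ → ℝ≥0∞) (t : ℝ) (ht : 0 < t) (h : t ∉ Iset a) :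
    rearrE (volI a) F t = 0 := by
  rw [← nonpos_iff_eq_zero, rearrE_le_iff]
  refine (volI_univ a _).trans ?_
  by_contra hc
  exact h ⟨ht, not_le.1 hc⟩

lemma Iset_lower {a : ℝ≥0∞} {s t : ℝ} (h : t ∈ Iset a) (hs : 0 < s) (hst : s ≤ t) : s ∈ Iset a :=
  ⟨hs, (ENNReal.ofReal_le_ofReal hst).trans_lt h.2⟩

/-- from points of `I` to all positive points -/
lemma extend (a : ℝ≥0∞) (ha : 0 < a) (H ψ : ℝ → ℝ≥0∞)
    (h : ∀ x ∈ Iset a, ∫⁻ t in Ioo 0 x, rearrE (volI a) H t ≤ ∫⁻ t in Ioo 0 x, ψ t)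
    (x : ℝ) (hx : 0 < x) :
    ∫⁻ t in Ioo 0 x, rearrE (volI a) H t ≤ ∫⁻ t in Ioo 0 x, (Iset a).indicator ψ t := by
  have hin : ∀ z ∈ Iset a, ∫⁻ t in Ioo 0 z, ψ t = ∫⁻ t in Ioo 0 z, (Iset a).indicator ψ t := by
    intro z hz
    refine setLIntegral_congr_fun measurableSet_Ioo fun t ht => ?_
    exact (indicator_of_mem (Iset_lower hz ht.1 ht.2.le) ψ).symm
  by_cases hxI : x ∈ Iset a
  · rw [← hin x hxI]; exact h x hxI
  have hax : a ≤ ENNReal.ofReal x := by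
    by_contra hc; exact hxI ⟨hx, not_le.1 hc⟩
  have hat : a ≠ ∞ := (hax.trans_lt ENNReal.ofReal_lt_top).ne
  have hz : 0 < a.toReal := ENNReal.toReal_pos ha.ne' hat
  have hzx : a.toReal ≤ x := ENNReal.toReal_le_of_le_ofReal hx.le hax
  have h1 : ∫⁻ t in Ioo 0 x, rearrE (volI a) H t ≤ ∫⁻ t in Ioo 0 a.toReal, rearrE (volI a) H t := by
    rw [← lintegral_indicator measurableSet_Ioo, ← lintegral_indicator measurableSet_Ioo]
    refine lintegral_mono fun t => ?_
    by_cases h0 : 0 < t ∧ t < x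
    · by_cases hx : t < a.toReal
      · simp [indicator, h0, hx]
      · have : t ∉ Iset a := fun hI =>
          hx ((ENNReal.ofReal_lt_iff_lt_toReal h0.1.le hat).1 hI.2)
        simp [indicator, h0, hx, rearrE_off a H t h0.1 this]
    · simp [indicator, h0]
  refine h1.trans (Ioo_le _ _ _ hz fun y hy hyz => ?_)
  have hyI : y ∈ Iset a := ⟨hy, (ENNReal.ofReal_lt_iff_lt_toReal hy.le hat).2 hyz⟩
  refine (h y hyI).trans ?_
  rw [hin y hyI]
  exact lintegral_mono_set (Ioo_subset_Ioo_right (hyz.le.trans hzx))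

/-- `Q_{L₁+L∞,w} = L₁ + M_W` with equality of norms:
`inf{B(g) : f ≺ g} = inf{‖u‖₁ + ‖h‖_{M_W} : f = u + h a.e.}`. -/
theorem stmt_16 (a : ℝ≥0∞) (ha : 0 < a) (w : ℝ → ℝ)
    (hw_pos : ∀ x ∈ Iset a, 0 < w x) (hw_anti : AntitoneOn w (Iset a)) (hw_meas : Measurable w)
    (hW_fin : ∀ t ∈ Iset a, ∫⁻ s in Set.Ioo 0 t, ENNReal.ofReal (w s) ≠ ∞)
    (f : ℝ → ℝ) (hf : Measurable f) :
    sInf {c : ℝ≥0∞ | ∃ g : ℝ → ℝ, Measurable g ∧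
        (∀ x : ℝ, 0 < x →
          ∫⁻ t in Set.Ioo 0 x, rearr (volI a) f t ≤ ∫⁻ t in Set.Ioo 0 x, rearr (volI a) g t) ∧
        c = Bnorm a w g}
      = sInf {c : ℝ≥0∞ | ∃ u h : ℝ → ℝ, Measurable u ∧ Measurable h ∧
          (∀ᵐ x ∂(volI a), f x = u x + h x) ∧
          c = (∫⁻ x in Iset a, ENNReal.ofReal |u x|) + MWnorm a w h} := by
  have hμ : volI a ≤ volume := Measure.restrict_le_self
  have hwE : Measurable fun t => ENNReal.ofReal (w t) := hw_meas.ennreal_ofReal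
  have habs : ∀ k : ℝ → ℝ, Measurable k → Measurable fun x => ENNReal.ofReal |k x| :=
    fun k hk => (hk.abs).ennreal_ofReal
  have htri : ∀ k k1 k2 : ℝ → ℝ, (∀ᵐ x ∂(volI a), k x = k1 x + k2 x) →
      ∀ᵐ x ∂(volI a), ENNReal.ofReal |k x| ≤ ENNReal.ofReal |k1 x| + ENNReal.ofReal |k2 x| := by
    intro k k1 k2 h
    filter_upwards [h] with x hx
    rw [← ENNReal.ofReal_add (abs_nonneg _) (abs_nonneg _), hx]
    exact ENNReal.ofReal_le_ofReal (abs_add_le _ _)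
  apply le_antisymm
  · refine le_sInf ?_
    rintro c ⟨u, h, hu, hh, hfe, rfl⟩
    rcases eq_or_ne (∫⁻ x in Iset a, ENNReal.ofReal |u x|) ∞ with hA | hA
    · rw [hA]; simp
    rcases eq_or_ne (MWnorm a w h) ∞ with hC | hC
    · rw [hC]; simp
    set C := (MWnorm a w h).toReal with hCdef
    have hC0 : 0 ≤ C := ENNReal.toReal_nonneg
    have hCe : ENNReal.ofReal C = MWnorm a w h := ENNReal.ofReal_toReal hC
    set us := rearr (volI a) u with hus
    have husm : Measurable us := rearrE_meas _ _
    have hust : ∫⁻ t in Ioi (0:ℝ), us t = ∫⁻ x in Iset a, ENNReal.ofReal |u x| :=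
      equimeas0 (volI a) _ (habs u hu)
    have husfin : ∀ t, 0 < t → us t ≠ ∞ := by
      intro t ht htop
      apply hA
      rw [← hust, eq_top_iff]
      calc (∞ : ℝ≥0∞) = ∫⁻ s in Ioo 0 t, (∞ : ℝ≥0∞) := by
            simp [ENNReal.top_mul, ht]
        _ ≤ ∫⁻ s in Ioo 0 t, us s := by
            refine setLIntegral_mono husm fun s hs => ?_
            rw [← htop]; exact rearrE_anti _ _ hs.2.le
        _ ≤ _ := lintegral_mono_set fun s hs => hs.1
    set u' : ℝ → ℝ := fun t => (us t).toReal with hu'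
    have hu'm : Measurable u' := husm.ennreal_toReal
    set v : ℝ → ℝ := fun t => C * w t with hv
    have hvm : Measurable v := hw_meas.const_mul C
    have hle : Bnorm a w (fun t => u' t + v t)
        ≤ (∫⁻ x in Iset a, ENNReal.ofReal |u x|) + MWnorm a w h := by
      unfold Bnorm
      refine le_trans (sInf_le ⟨u', v, C, hu'm, hvm, hC0, Eventually.of_forall fun _ => rfl, ?_, rfl⟩) ?_
      · intro t ht
        unfold rearr
        rw [rearrE_le_iff]
        unfold volI
        rw [Measure.restrict_apply' (Iset_meas a)]
        refine (measure_mono (t := Ioo 0 t) ?_).trans (by simp)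
        rintro x ⟨hx1, hx2⟩
        refine ⟨hx2.1, ?_⟩
        by_contra hcon
        have h1 : w x ≤ w t := hw_anti ht hx2 (not_lt.1 hcon)
        have h2 : |v x| ≤ C * w t := by
          rw [abs_of_nonneg (mul_nonneg hC0 (hw_pos x hx2).le)]
          exact mul_le_mul_of_nonneg_left h1 hC0
        exact absurd (ENNReal.ofReal_le_ofReal h2) (not_le.2 hx1)
      · rw [hCe, ← hust]
        refine add_le_add ?_ le_rfl
        calc ∫⁻ x in Iset a, ENNReal.ofReal |u' x| ≤ ∫⁻ x in Iset a, us x := by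
              refine lintegral_mono fun x => ?_
              rw [hu', abs_of_nonneg ENNReal.toReal_nonneg]
              exact ENNReal.ofReal_toReal_le
          _ ≤ _ := lintegral_mono_set fun s hs => hs.1
    refine le_trans (sInf_le ⟨fun t => u' t + v t, hu'm.add hvm, ?_, rfl⟩) hle
    intro x hx
    have s1 : ∫⁻ t in Ioo 0 x, rearr (volI a) f t
        ≤ (∫⁻ t in Ioo 0 x, us t) + ∫⁻ t in Ioo 0 x, rearr (volI a) h t :=
      subadd (volI a) _ _ _ (habs f hf) (habs u hu) (habs h hh) (htri f u h hfe) x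
    have s2 : ∫⁻ t in Ioo 0 x, rearr (volI a) h t
        ≤ ∫⁻ t in Ioo 0 x, (Iset a).indicator (fun t => ENNReal.ofReal C * ENNReal.ofReal (w t)) t := by
      refine extend a ha _ _ ?_ x hx
      intro z hz
      rw [lintegral_const_mul _ hwE, hCe]
      have h1 : (∫⁻ t in Ioo 0 z, rearr (volI a) h t) / (∫⁻ t in Ioo 0 z, ENNReal.ofReal (w t))
          ≤ MWnorm a w h := by
        unfold MWnorm
        exact le_iSup₂_of_le z hz le_rfl
      have hW0 : ∫⁻ t in Ioo 0 z, ENNReal.ofReal (w t) ≠ 0 := by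
        have : ENNReal.ofReal z * ENNReal.ofReal (w z) ≤ ∫⁻ t in Ioo 0 z, ENNReal.ofReal (w t) := by
          calc _ = ∫⁻ t in Ioo 0 z, ENNReal.ofReal (w z) := by simp [mul_comm]
            _ ≤ _ := setLIntegral_mono hwE fun t ht =>
              ENNReal.ofReal_le_ofReal (hw_anti (Iset_lower hz ht.1 ht.2.le) hz ht.2.le)
        refine (lt_of_lt_of_le ?_ this).ne'
        exact ENNReal.mul_pos (by simpa using hz.1) (by simpa using hw_pos z hz)
      exact (ENNReal.div_le_iff hW0 (hW_fin z hz)).1 h1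
    refine (s1.trans (add_le_add_right s2 _)).trans ?_
    refine le_trans ?_ (hardy (volI a) hμ _ (habs _ (hu'm.add hvm)) x)
    rw [← lintegral_add_left husm]
    unfold volI
    rw [Measure.restrict_restrict measurableSet_Ioo, ← lintegral_indicator measurableSet_Ioo,
      ← lintegral_indicator (measurableSet_Ioo.inter (Iset_meas a))]
    refine lintegral_mono fun t => ?_
    by_cases ht : t ∈ Ioo 0 x
    · by_cases htI : t ∈ Iset a
      · rw [indicator_of_mem ht, indicator_of_mem (show t ∈ Ioo 0 x ∩ Iset a from ⟨ht, htI⟩),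
          indicator_of_mem htI]
        have hw0 := (hw_pos t htI).le
        change us t + ENNReal.ofReal C * ENNReal.ofReal (w t) ≤ ENNReal.ofReal |(us t).toReal + C * w t|
        rw [abs_of_nonneg (add_nonneg ENNReal.toReal_nonneg (mul_nonneg hC0 hw0)),
          ENNReal.ofReal_add ENNReal.toReal_nonneg (mul_nonneg hC0 hw0),
          ENNReal.ofReal_toReal (husfin t ht.1), ENNReal.ofReal_mul hC0]
      · rw [indicator_of_mem ht, indicator_of_notMem htI]
        have : us t = 0 := rearrE_off a _ t ht.1 htI
        rw [this]; simp
    · rw [indicator_of_notMem ht]; simp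
  · refine le_sInf ?_
    rintro c ⟨g, hg, hfg, rfl⟩
    refine le_sInf ?_
    rintro c ⟨u, v, C, hu, hv, hC0, hge, hvw, rfl⟩
    rcases eq_or_ne (∫⁻ x in Iset a, ENNReal.ofReal |u x|) ∞ with hA | hA
    · rw [hA]; simp
    set A := ∫⁻ x in Iset a, ENNReal.ofReal |u x| with hAdef
    set wt : ℝ → ℝ≥0∞ := (Iset a).indicator (fun t => ENNReal.ofReal (C * w t)) with hwt
    have hwta : AntitoneOn wt (Ioi 0) := by
      intro s hs t ht hst
      by_cases htI : t ∈ Iset a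
      · have hsI := Iset_lower htI hs hst
        rw [hwt, indicator_of_mem htI, indicator_of_mem hsI]
        exact ENNReal.ofReal_le_ofReal (mul_le_mul_of_nonneg_left (hw_anti hsI htI hst) hC0)
      · rw [hwt, indicator_of_notMem htI]; simp
    have hmaj : ∀ x : ℝ, 0 < x → ∫⁻ t in Ioo 0 x, rearrE (volI a) (fun x => ENNReal.ofReal |f x|) t
        ≤ A + ∫⁻ t in Ioo 0 x, wt t := by
      intro x hx
      refine (hfg x hx).trans ?_
      refine (subadd (volI a) _ _ _ (habs g hg) (habs u hu) (habs v hv) (htri g u v hge) x).trans ?_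
      refine add_le_add ?_ ?_
      · have := int_le (volI a) _ (habs u hu) 0 x
        simp only [mul_zero, zero_add, tsub_zero] at this
        exact this
      · refine setLIntegral_mono' measurableSet_Ioo fun t ht => ?_
        by_cases htI : t ∈ Iset a
        · rw [hwt, indicator_of_mem htI]; exact hvw t htI
        · rw [rearrE_off a _ t ht.1 htI]; simp
    obtain ⟨κ, hκ1, hκ2⟩ := core (volI a) _ wt (habs f hf) (fun _ => ENNReal.ofReal_ne_top) hwta A hA
      hmaj
    have hdec : ∃ u' h' : ℝ → ℝ, Measurable u' ∧ Measurable h' ∧ (∀ x, f x = u' x + h' x) ∧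
        (∀ x, ENNReal.ofReal |u' x| ≤ ENNReal.ofReal |f x| - κ) ∧
        (∀ x, ENNReal.ofReal |h' x| ≤ ENNReal.ofReal |f x|) ∧
        (∀ x, ENNReal.ofReal |h' x| ≤ κ) := by
      rcases eq_or_ne κ ∞ with rfl | hκ
      · exact ⟨fun _ => 0, f, measurable_const, hf, by simp, by simp, by simp, by simp⟩
      · lift κ to NNReal using hκ
        refine ⟨fun x => f x - max (-(κ:ℝ)) (min κ (f x)), fun x => max (-(κ:ℝ)) (min κ (f x)),
          by fun_prop, by fun_prop, by simp, ?_, ?_, ?_⟩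
        · intro x
          rw [← ENNReal.ofReal_coe_nnreal, ← ENNReal.ofReal_sub _ κ.coe_nonneg]
          have hk : (0:ℝ) ≤ κ := κ.coe_nonneg
          beta_reduce
          rcases le_total |f x| κ with h1 | h1
          · have h2 := abs_le.1 h1
            rw [min_eq_right h2.2, max_eq_right h2.1]; simp
          · refine ENNReal.ofReal_le_ofReal ?_
            rcases le_total 0 (f x) with h3 | h3
            · rw [abs_of_nonneg h3] at h1 ⊢
              rw [min_eq_left h1, max_eq_right (by linarith), abs_of_nonneg (by linarith)]
            · rw [abs_of_nonpos h3] at h1 ⊢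
              rw [min_eq_right (by linarith), max_eq_left (by linarith), abs_of_nonpos (by linarith)]
              linarith
        · intro x
          refine ENNReal.ofReal_le_ofReal ?_
          have hk : (0:ℝ) ≤ κ := κ.coe_nonneg
          have h1 := neg_abs_le (f x)
          have h2 := le_abs_self (f x)
          have h3 := abs_nonneg (f x)
          rw [abs_le]
          constructor
          · exact le_max_of_le_right (le_min (by linarith) h1)
          · exact max_le (by linarith) ((min_le_right _ _).trans h2)
        · intro x
          rw [← ENNReal.ofReal_coe_nnreal]
          refine ENNReal.ofReal_le_ofReal ?_
          have hk : (0:ℝ) ≤ κ := κ.coe_nonneg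
          rw [abs_le]
          exact ⟨le_max_left _ _, max_le (by linarith) (min_le_left _ _)⟩
    obtain ⟨u', h', hu'm, hh'm, hfe, hu'k, hh'f, hh'k⟩ := hdec
    refine le_trans (sInf_le ⟨u', h', hu'm, hh'm, Eventually.of_forall hfe, rfl⟩) ?_
    refine add_le_add ((lintegral_mono hu'k).trans hκ1) ?_
    refine iSup₂_le fun x hx => ?_
    refine ENNReal.div_le_of_le_mul ?_
    calc ∫⁻ t in Ioo 0 x, rearr (volI a) h' t
        ≤ ∫⁻ t in Ioo 0 x, min (rearrE (volI a) (fun x => ENNReal.ofReal |f x|) t) κ := by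
          refine lintegral_mono fun t => le_min (rearrE_mono _ hh'f t) ?_
          unfold rearr
          rw [rearrE_le_iff]
          have : {x | κ < ENNReal.ofReal |h' x|} = ∅ := by
            ext x; simpa using hh'k x
          rw [this]; simp
      _ ≤ ∫⁻ t in Ioo 0 x, wt t := hκ2 x hx.1
      _ ≤ ∫⁻ t in Ioo 0 x, ENNReal.ofReal C * ENNReal.ofReal (w t) := by
          refine lintegral_mono fun t => ?_
          rw [← ENNReal.ofReal_mul hC0]
          exact indicator_le_self _ _ _
      _ = _ := lintegral_const_mul _ hwE
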